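/- arXiv:1002.4935 — 3 statements merged into one kernel-verified Lean document; each statement's English description precedes it below -/
import Mathlib

section
/- Let 𝔻 be a subset of a vector space 𝕍 over an infinite field, let x_1,…,x_r ∈ 𝔻 and α_1,…,α_r be nonzero scalars, and set x = α_1 x_1 + ⋯ + α_r x_r. If this is the unique r-term 𝔻-representation of x (i.e., for any y_1,…,y_r ∈ 𝔻 and nonzero scalars β_1,…,β_r with x = β_1 y_1 + ⋯ + β_r y_r, the list of pairs (β_p, y_p) agrees with (α_p, x_p) up to permutation), then x_1,…,x_r are linearly independent. -/
open scoped BigOperators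

/-!
If `g` is a nontrivial linear relation among the `x i`, then `∑ i, (α i + t * g i) • x i` does not
depend on the scalar `t`. Each coefficient `α i + t * g i` vanishes for at most one `t`, since
`α i ≠ 0`, so over an infinite domain this line of coefficient vectors yields infinitely many
representations with nonzero coefficients, too many to be permutations of a single one.
-/

section Representations

variable {R M ι : Type*} [Ring R] [NoZeroDivisors R]

theorem subsingleton_setOf_add_mul_eq_zero {a : R} (ha : a ≠ 0) (b : R) :
    {t : R | a + t * b = 0}.Subsingleton := by
  intro s (hs : a + s * b = 0) t (ht : a + t * b = 0)
  have hb : b ≠ 0 := by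
    rintro rfl
    exact ha (by simpa using hs)
  exact mul_right_cancel₀ hb (add_left_cancel (hs.trans ht.symm))

theorem infinite_setOf_forall_add_mul_ne_zero [Infinite R] [Finite ι] {a : ι → R}
    (ha : ∀ i, a i ≠ 0) (b : ι → R) : {t : R | ∀ i, a i + t * b i ≠ 0}.Infinite := by
  have hbad : (⋃ i, {t : R | a i + t * b i = 0}).Finite :=
    Set.finite_iUnion fun i ↦ (subsingleton_setOf_add_mul_eq_zero (ha i) (b i)).finite
  refine hbad.infinite_compl.mono ?_
  intro t ht i hi
  exact ht (Set.mem_iUnion.mpr ⟨i, hi⟩)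

variable [Infinite R] [AddCommGroup M] [Module R M] [Fintype ι]

theorem infinite_setOf_sum_smul_eq_of_relation {x : ι → M} {α g : ι → R} (hα : ∀ i, α i ≠ 0)
    (hg : ∑ i, g i • x i = 0) (hg_ne : g ≠ 0) :
    {β : ι → R | (∀ i, β i ≠ 0) ∧ ∑ i, β i • x i = ∑ i, α i • x i}.Infinite := by
  have hinj : Function.Injective fun t : R ↦ α + t • g :=
    (add_right_injective α).comp (smul_left_injective R hg_ne)
  have hline : ((fun t : R ↦ α + t • g) '' {t | ∀ i, α i + t * g i ≠ 0}).Infinite :=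
    (infinite_setOf_forall_add_mul_ne_zero hα g).image hinj.injOn
  refine hline.mono ?_
  rintro _ ⟨t, ht, rfl⟩
  refine ⟨ht, ?_⟩
  calc ∑ i, (α + t • g) i • x i = ∑ i, α i • x i + t • ∑ i, g i • x i := by
        simp only [Pi.add_apply, Pi.smul_apply, smul_eq_mul, add_smul, mul_smul,
          Finset.sum_add_distrib, Finset.smul_sum]
    _ = ∑ i, α i • x i := by rw [hg, smul_zero, add_zero]

theorem linearIndependent_of_unique_representation_general {x : ι → M} {α : ι → R}
    (hα : ∀ i, α i ≠ 0)
    (hfin : {β : ι → R | (∀ i, β i ≠ 0) ∧ ∑ i, β i • x i = ∑ i, α i • x i}.Finite) :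
    LinearIndependent R x := by
  rw [Fintype.linearIndependent_iff]
  intro g hg
  by_contra! hg_ne
  exact infinite_setOf_sum_smul_eq_of_relation hα hg (Function.ne_iff.mpr hg_ne) hfin

end Representations

theorem finite_setOf_exists_comp_perm_eq {ι κ : Type*} [Finite ι] (f : ι → κ) :
    {g : ι → κ | ∃ σ : Equiv.Perm ι, g ∘ σ = f}.Finite := by
  refine (Set.finite_range fun σ : Equiv.Perm ι ↦ f ∘ σ.symm).subset ?_
  rintro g ⟨σ, rfl⟩
  exact ⟨σ, by simp only [Function.comp_assoc, Equiv.self_comp_symm, Function.comp_id]⟩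

/-- Lemma 5.1(i): if `x = α₁ x₁ + ⋯ + α_r x_r` is the unique `r`-term
`𝔻`-representation of `x` (up to permutation of the terms), then `x₁, …, x_r` are
linearly independent. -/
theorem linearIndependent_of_unique_representation
    {F V : Type*} [Field F] [Infinite F] [AddCommGroup V] [Module F V]
    (D : Set V) {r : ℕ} (x : Fin r → V) (α : Fin r → F)
    (hxD : ∀ i, x i ∈ D) (hα : ∀ i, α i ≠ 0)
    (huniq : ∀ (y : Fin r → V) (β : Fin r → F), (∀ i, y i ∈ D) → (∀ i, β i ≠ 0) →
      ∑ i, β i • y i = ∑ i, α i • x i →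
      ∃ σ : Equiv.Perm (Fin r), ∀ i, β (σ i) = α i ∧ y (σ i) = x i) :
    LinearIndependent F x :=
  linearIndependent_of_unique_representation_general hα <|
    (finite_setOf_exists_comp_perm_eq α).subset fun β ⟨hβ, hsum⟩ ↦
      (huniq x β hxD hβ hsum).imp fun _ hσ ↦ funext fun i ↦ (hσ i).1
end

section
/- Let 𝔻 be a subset of a vector space 𝕍 over an infinite field, let x_1,…,x_r ∈ 𝔻 and α_1,…,α_r be nonzero scalars, and set x = α_1 x_1 + ⋯ + α_r x_r. If this is the unique r-term 𝔻-representation of x (up to permutation of terms), then it is also a sparsest 𝔻-representation: x admits no 𝔻-representation with fewer than r terms. -/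
open scoped BigOperators

/-! A representation with `n + 1` terms can be lengthened by splitting `α₀ x₀` as
`t x₀ + (α₀ - t) x₀`, and the scalar `t` ranges over an infinite set. So any shorter nonempty
representation of a vector yields infinitely many coefficient tuples for its `r`-term
representations. The empty representation cannot be split, but then the vector is `0`, and an
`r`-term representation of it can be rescaled by any nonzero scalar. Uniqueness up to permutation,
in contrast, allows only finitely many coefficient tuples. -/

theorem finite_of_forall_exists_perm {ι M : Type*} [Finite ι] {S : Set (ι → M)} (α : ι → M)
    (hS : ∀ β ∈ S, ∃ σ : Equiv.Perm ι, ∀ i, β (σ i) = α i) : S.Finite := by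
  refine (Set.finite_range fun σ : Equiv.Perm ι => α ∘ σ.symm).subset fun β hβ => ?_
  obtain ⟨σ, hσ⟩ := hS β hβ
  exact ⟨σ, ((Equiv.eq_comp_symm σ β α).mpr (funext hσ)).symm⟩

section Semiring

variable {R V : Type*} [Semiring R] [AddCommMonoid V] [Module R V] {D : Set V}

/-- `v = α₁ x₁ + ⋯ + α_r x_r` is an `r`-term `D`-representation of `v`: the vectors `xᵢ` lie in `D`
and the scalars `αᵢ` are nonzero. Terms are indexed by `Fin r` and the `xᵢ` may repeat. -/
structure IsRepresentation (D : Set V) {r : ℕ} (x : Fin r → V) (α : Fin r → R) (v : V) :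
    Prop where
  mem : ∀ i, x i ∈ D
  ne_zero : ∀ i, α i ≠ 0
  sum_eq : ∑ i, α i • x i = v

/-- The coefficient tuples of the `r`-term `D`-representations of `v`, as ordered tuples: permuting
the terms of a representation gives another element. -/
def representationCoeffs (R : Type*) {V : Type*} [Semiring R] [AddCommMonoid V] [Module R V]
    (D : Set V) (r : ℕ) (v : V) : Set (Fin r → R) :=
  {α | ∃ x : Fin r → V, IsRepresentation D x α v}

namespace IsRepresentation

theorem smul_of_zero [NoZeroDivisors R] {r : ℕ} {x : Fin r → V} {α : Fin r → R}
    (h : IsRepresentation D x α 0) {t : R} (ht : t ≠ 0) : IsRepresentation D x (t • α) 0 where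
  mem := h.mem
  ne_zero i := mul_ne_zero ht (h.ne_zero i)
  sum_eq := by
    simp only [Pi.smul_apply, smul_assoc, ← Finset.smul_sum, h.sum_eq, smul_zero]

theorem infinite_representationCoeffs_of_zero [Infinite R] [IsRightCancelMulZero R] {r : ℕ}
    {x : Fin r → V} {α : Fin r → R} (h : IsRepresentation D x α 0) (hr : 0 < r) :
    (representationCoeffs R D r (0 : V)).Infinite := by
  have infinite_scalars : ({0}ᶜ : Set R).Infinite := (Set.finite_singleton 0).infinite_compl
  refine Set.infinite_of_injOn_mapsTo (f := (· • α)) ?_ ?_ infinite_scalars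
  · exact fun s _ t _ hst => mul_right_cancel₀ (h.ne_zero ⟨0, hr⟩) (congrFun hst ⟨0, hr⟩)
  · exact fun t ht => ⟨x, h.smul_of_zero ht⟩

end IsRepresentation

end Semiring

section Ring

variable {R V : Type*} [Ring R] [AddCommMonoid V] [Module R V] {D : Set V} {v : V}

namespace IsRepresentation

theorem split_first {n : ℕ} {x : Fin (n + 1) → V} {α : Fin (n + 1) → R}
    (h : IsRepresentation D x α v) {t : R} (ht : t ≠ 0) (htα : t ≠ α 0) :
    IsRepresentation D (Fin.cons (x 0) x : Fin (n + 2) → V)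
      (Fin.cons t (Fin.cons (α 0 - t) (Fin.tail α))) v where
  mem := Fin.cases (h.mem 0) h.mem
  ne_zero := Fin.cases ht (Fin.cases (sub_ne_zero.mpr htα.symm) fun i => h.ne_zero i.succ)
  sum_eq := by
    rw [← h.sum_eq]
    simp only [Fin.sum_univ_succ, Fin.cons_zero, Fin.cons_succ, Fin.tail]
    rw [← add_assoc, ← add_smul, add_sub_cancel]

variable [Infinite R]

theorem infinite_representationCoeffs_succ {n : ℕ} {x : Fin (n + 1) → V} {α : Fin (n + 1) → R}
    (h : IsRepresentation D x α v) : (representationCoeffs R D (n + 2) v).Infinite := by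
  have infinite_scalars : ({0, α 0}ᶜ : Set R).Infinite := (Set.toFinite _).infinite_compl
  refine Set.infinite_of_injOn_mapsTo
    (f := fun t => Fin.cons t (Fin.cons (α 0 - t) (Fin.tail α))) ?_ ?_ infinite_scalars
  · exact fun s _ t _ hst => congrFun hst 0
  · intro t ht
    obtain ⟨ht₀, htα⟩ : t ≠ 0 ∧ t ≠ α 0 := by simpa using ht
    exact ⟨_, h.split_first ht₀ htα⟩

theorem infinite_representationCoeffs_of_pos_of_lt {s r : ℕ} {x : Fin s → V} {α : Fin s → R}
    (h : IsRepresentation D x α v) (hs : 0 < s) (hsr : s < r) :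
    (representationCoeffs R D r v).Infinite := by
  induction r, hsr using Nat.le_induction with
  | base =>
    obtain ⟨n, rfl⟩ := Nat.exists_eq_add_one.mpr hs
    exact h.infinite_representationCoeffs_succ
  | succ r hsr ih =>
    obtain ⟨n, rfl⟩ := Nat.exists_eq_add_one.mpr (hs.trans hsr)
    obtain ⟨_, _, h'⟩ := ih.nonempty
    exact h'.infinite_representationCoeffs_succ

end IsRepresentation

theorem sparsest_of_unique_representation_general [NoZeroDivisors R] [Infinite R]
    {r : ℕ} {x : Fin r → V} {α : Fin r → R} (h : IsRepresentation D x α v)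
    (hfin : (representationCoeffs R D r v).Finite)
    {s : ℕ} (hsr : s < r) (y : Fin s → V) (β : Fin s → R) : ¬ IsRepresentation D y β v := by
  intro h'
  rcases Nat.eq_zero_or_pos s with rfl | hs
  · obtain rfl : 0 = v := by simpa using h'.sum_eq
    exact h.infinite_representationCoeffs_of_zero hsr hfin
  · exact h'.infinite_representationCoeffs_of_pos_of_lt hs hsr hfin

end Ring

/-- Lemma 5.1(iii): if `x = α₁ x₁ + ⋯ + α_r x_r` is the unique `r`-term
`𝔻`-representation of `x` (up to permutation of the terms), then it is also a sparsest
`𝔻`-representation: `x` admits no `𝔻`-representation with fewer than `r` terms. -/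
theorem sparsest_of_unique_representation
    {F V : Type*} [Field F] [Infinite F] [AddCommGroup V] [Module F V]
    (D : Set V) {r : ℕ} (x : Fin r → V) (α : Fin r → F)
    (hxD : ∀ i, x i ∈ D) (hα : ∀ i, α i ≠ 0)
    (huniq : ∀ (y : Fin r → V) (β : Fin r → F), (∀ i, y i ∈ D) → (∀ i, β i ≠ 0) →
      ∑ i, β i • y i = ∑ i, α i • x i →
      ∃ σ : Equiv.Perm (Fin r), ∀ i, β (σ i) = α i ∧ y (σ i) = x i) :
    ∀ s : ℕ, s < r → ∀ (y : Fin s → V) (β : Fin s → F),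
      (∀ i, y i ∈ D) → (∀ i, β i ≠ 0) → ∑ i, β i • y i ≠ ∑ i, α i • x i :=
  have finite_coeffs : (representationCoeffs F D r (∑ i, α i • x i)).Finite :=
    finite_of_forall_exists_perm α fun β ⟨y, h⟩ =>
      (huniq y β h.mem h.ne_zero h.sum_eq).imp fun _ hσ i => (hσ i).1
  fun _ hsr y β hy hβ hsum => sparsest_of_unique_representation_general
    ⟨hxD, hα, rfl⟩ finite_coeffs hsr y β ⟨hy, hβ, hsum⟩
end

section
/- Let X ∈ ℂ^{m×n} be a matrix with columns x_1,…,x_n, and let β ∈ ℂ^n satisfy Xβ = x. If 2‖β‖₀ < spark({x_1,…,x_n}), then β is the unique solution of min{‖γ‖₀ : Xγ = x}: every γ ∈ ℂ^n with Xγ = x and γ ≠ β satisfies ‖γ‖₀ > ‖β‖₀. -/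
open scoped BigOperators

noncomputable section

/-- `‖β‖₀`: the number of nonzero entries of `β`. -/
noncomputable def l0 {n : ℕ} (β : Fin n → ℂ) : ℕ := (Function.support β).ncard

/-- The spark of a finite collection of vectors: the smallest cardinality of a linearly
dependent subcollection (`⊤` if the whole collection is linearly independent). -/
noncomputable def spark {ι : Type*} {E : Type*} [AddCommGroup E] [Module ℂ E]
    (v : ι → E) : ℕ∞ :=
  sInf {k : ℕ∞ | ∃ s : Finset ι, (s.card : ℕ∞) = k ∧ ¬ LinearIndependent ℂ (fun i : s => v i.1)}

/-!
Two distinct representations of `x` as a linear combination of the `v i` make `v` linearly dependent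
on the union of their supports, so their sparsities add up to at least `spark v`. If the first
sparsity is less than half of `spark v`, the second must exceed it.
-/

section Representations

variable {ι E : Type*} [AddCommGroup E] [Module ℂ E] {v : ι → E}

theorem spark_le_card_of_not_linearIndepOn {s : Finset ι} (hs : ¬LinearIndepOn ℂ v s) :
    spark v ≤ s.card :=
  sInf_le ⟨s, rfl, hs⟩

theorem spark_le_card_support_add_card_support {b c : ι →₀ ℂ}
    (h : Finsupp.linearCombination ℂ v b = Finsupp.linearCombination ℂ v c) (hne : b ≠ c) :
    spark v ≤ b.support.card + c.support.card := by
  classical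
  have hdep : ¬LinearIndepOn ℂ v (b.support ∪ c.support : Finset ι) :=
    linearDepOn_iff'ₛ.mpr
      ⟨b, c, Finset.coe_subset.mpr Finset.subset_union_left,
        Finset.coe_subset.mpr Finset.subset_union_right, h, hne⟩
  calc
    spark v ≤ (b.support ∪ c.support).card := spark_le_card_of_not_linearIndepOn hdep
    _ ≤ b.support.card + c.support.card := mod_cast Finset.card_union_le _ _

theorem sparsest_solution_unique_of_spark_general {x : E} {b c : ι →₀ ℂ}
    (hb : Finsupp.linearCombination ℂ v b = x) (hspark : (2 * b.support.card : ℕ∞) < spark v)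
    (hc : Finsupp.linearCombination ℂ v c = x) (hne : c ≠ b) :
    b.support.card < c.support.card := by
  have hlt : (2 * b.support.card : ℕ∞) < b.support.card + c.support.card :=
    hspark.trans_le (spark_le_card_support_add_card_support (hb.trans hc.symm) hne.symm)
  norm_cast at hlt
  omega

end Representations

theorem l0_eq_card_support {n : ℕ} (β : Fin n → ℂ) :
    l0 β = (Finsupp.equivFunOnFinite.symm β).support.card := by
  rw [l0, ← Set.ncard_coe_finset, ← Finsupp.fun_support_eq, Finsupp.coe_equivFunOnFinite_symm]

theorem linearCombination_col_eq_mulVec {m n R : Type*} [Fintype n] [CommSemiring R]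
    (A : Matrix m n R) (w : n → R) :
    Finsupp.linearCombination R A.col (Finsupp.equivFunOnFinite.symm w) = A.mulVec w := by
  ext i
  simp [Finsupp.linearCombination_apply, Finsupp.sum_fintype, Matrix.mulVec, dotProduct, mul_comm]

/-- uniqueness of the sparsest solution via spark: if `Xβ = x` and
`2‖β‖₀ < spark(X)` (spark of the columns of `X`), then `β` is the unique solution of
`min {‖γ‖₀ : Xγ = x}`: every other solution `γ ≠ β` satisfies `‖γ‖₀ > ‖β‖₀`. -/
theorem sparsest_solution_unique_of_spark {m n : ℕ} (X : Matrix (Fin m) (Fin n) ℂ)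
    (x : Fin m → ℂ) (β : Fin n → ℂ) (hβ : X.mulVec β = x)
    (hspark : (2 * l0 β : ℕ∞) < spark (fun j i => X i j)) :
    ∀ γ : Fin n → ℂ, X.mulVec γ = x → γ ≠ β → l0 β < l0 γ := by
  intro γ hγ hne
  simp only [l0_eq_card_support] at hspark ⊢
  exact sparsest_solution_unique_of_spark_general
    ((linearCombination_col_eq_mulVec X β).trans hβ) hspark
    ((linearCombination_col_eq_mulVec X γ).trans hγ)
    (Finsupp.equivFunOnFinite.symm.injective.ne hne)
end
end
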